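/- For every integer i ≥ 1, ν₂(S(16i+12, 5)) ≥ 3, ν₂(S(16i+7, 5)) = 2, and ν₂(S(16i+15, 5)) ≥ 3. -/

import Mathlib

/-- Stirling numbers of the second kind, via the recurrence
`S(n+1,k+1) = S(n,k) + (k+1)·S(n,k+1)`. -/
def stirling2 : ℕ → ℕ → ℕ
  | 0, 0 => 1
  | 0, _ + 1 => 0
  | _ + 1, 0 => 0
  | n + 1, k + 1 => stirling2 n k + (k + 1) * stirling2 n (k + 1)

/-!
The number `k ! * S(n, k)` is the `k`-th forward difference of `x ↦ x ^ n` at `0`, hence an integer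
combination of the powers `j ^ n` with `j ≤ k`. A period of these powers modulo `k ! * m` is
therefore a period of `n ↦ S(n, k)` modulo `m`. For `k = 5` and `m = 8` the modulus is `960`, and
`16` is a period for `n ≥ 6`, so the valuations are read off from `S(12, 5)`, `S(7, 5)`, `S(15, 5)`.
-/

open Finset
open scoped Nat

theorem stirling2_eq_stirlingSecond : ∀ n k, stirling2 n k = Nat.stirlingSecond n k
  | 0, 0 => rfl
  | 0, _ + 1 => rfl
  | _ + 1, 0 => rfl
  | n + 1, k + 1 => by
    rw [stirling2, Nat.stirlingSecond_succ_succ, stirling2_eq_stirlingSecond n k,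
      stirling2_eq_stirlingSecond n (k + 1), add_comm]

theorem stirlingSecond_pos {n k : ℕ} (hk : k ≠ 0) (hkn : k ≤ n) : 0 < Nat.stirlingSecond n k := by
  obtain ⟨k, rfl⟩ := Nat.exists_eq_succ_of_ne_zero hk
  induction n, hkn using Nat.le_induction with
  | base => simp only [Nat.stirlingSecond_self, zero_lt_one]
  | succ n _ ih =>
    rw [Nat.stirlingSecond_succ_succ]
    positivity

theorem mul_descFactorial (x k : ℕ) :
    x * x.descFactorial k = x.descFactorial (k + 1) + k * x.descFactorial k := by
  rcases le_or_gt k x with hkx | hxk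
  · rw [Nat.descFactorial_succ, ← add_mul, Nat.sub_add_cancel hkx]
  · simp only [Nat.descFactorial_of_lt hxk, Nat.descFactorial_of_lt (hxk.trans k.lt_succ_self),
      mul_zero, add_zero]

theorem pow_eq_sum_stirlingSecond_mul_descFactorial (x n : ℕ) :
    x ^ n = ∑ k ∈ range (n + 1), Nat.stirlingSecond n k * x.descFactorial k := by
  induction n with
  | zero => simp
  | succ n ih =>
    have shift : ∑ k ∈ range (n + 1), Nat.stirlingSecond n k * (k * x.descFactorial k) =
        ∑ k ∈ range (n + 1),
          Nat.stirlingSecond n (k + 1) * ((k + 1) * x.descFactorial (k + 1)) := by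
      rw [sum_range_succ', sum_range_succ, Nat.stirlingSecond_eq_zero_of_lt n.lt_succ_self]
      simp only [zero_mul, mul_zero, add_zero]
    calc x ^ (n + 1)
      _ = ∑ k ∈ range (n + 1), Nat.stirlingSecond n k * (x * x.descFactorial k) := by
        rw [pow_succ', ih, mul_sum]
        exact sum_congr rfl fun k _ ↦ mul_left_comm ..
      _ = ∑ k ∈ range (n + 1), Nat.stirlingSecond (n + 1) (k + 1) * x.descFactorial (k + 1) := by
        simp only [mul_descFactorial, mul_add, sum_add_distrib]
        rw [shift, ← sum_add_distrib]
        exact sum_congr rfl fun k _ ↦ by rw [Nat.stirlingSecond_succ_succ]; ring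
      _ = ∑ k ∈ range (n + 2), Nat.stirlingSecond (n + 1) k * x.descFactorial k := by
        rw [sum_range_succ' _ (n + 1), Nat.stirlingSecond_succ_zero, zero_mul, add_zero]

theorem fwdDiff_iter_pow_zero (n k : ℕ) :
    (fwdDiff 1)^[k] (fun x : ℕ ↦ (x : ℤ) ^ n) 0 = k ! * Nat.stirlingSecond n k := by
  have expansion : (fun x : ℕ ↦ (x : ℤ) ^ n) = ∑ j ∈ range (n + 1),
      (Nat.stirlingSecond n j * j ! : ℤ) • fun x : ℕ ↦ (x.choose j : ℤ) := by
    ext x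
    rw [Finset.sum_apply]
    simp only [Pi.smul_apply, smul_eq_mul, mul_assoc]
    exact_mod_cast (pow_eq_sum_stirlingSecond_mul_descFactorial x n).trans
      (sum_congr rfl fun j _ ↦ by rw [Nat.descFactorial_eq_factorial_mul_choose])
  simp only [expansion, fwdDiff_iter_finsetSum, fwdDiff_iter_const_smul, Finset.sum_apply,
    Pi.smul_apply, fwdDiff_iter_choose_zero, smul_eq_mul, mul_ite, mul_one, mul_zero,
    sum_ite_eq, mem_range]
  split_ifs with hkn
  · rw [mul_comm]
  · rw [Nat.stirlingSecond_eq_zero_of_lt (by lia), Nat.cast_zero, mul_zero]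

theorem factorial_mul_stirlingSecond_eq_sum (n k : ℕ) :
    (k ! * Nat.stirlingSecond n k : ℤ) =
      ∑ j ∈ range (k + 1), (-1) ^ (k - j) * k.choose j * (j : ℤ) ^ n := by
  simp [← fwdDiff_iter_pow_zero, fwdDiff_iter_eq_sum_shift]

theorem stirlingSecond_modEq_of_pow_modEq {a b k m : ℕ}
    (h : ∀ j ≤ k, j ^ a ≡ j ^ b [MOD k ! * m]) :
    Nat.stirlingSecond a k ≡ Nat.stirlingSecond b k [MOD m] := by
  apply Nat.ModEq.mul_left_cancel' k.factorial_ne_zero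
  rw [← Int.natCast_modEq_iff]
  push_cast
  simp only [factorial_mul_stirlingSecond_eq_sum]
  refine Int.ModEq.sum fun j hj ↦ Int.ModEq.mul_left _ ?_
  exact_mod_cast Int.natCast_modEq_iff.2 (h j (mem_range_succ_iff.1 hj))

theorem pow_add_mul_modEq {a m p r : ℕ} (h : a ^ (r + p) ≡ a ^ r [MOD m]) (i : ℕ) :
    a ^ (r + p * i) ≡ a ^ r [MOD m] := by
  induction i with
  | zero => rfl
  | succ i ih =>
    calc a ^ (r + p * (i + 1))
      _ = a ^ (r + p * i) * a ^ p := by ring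
      _ ≡ a ^ r * a ^ p [MOD m] := ih.mul_right _
      _ = a ^ (r + p) := by ring
      _ ≡ a ^ r [MOD m] := h

theorem stirlingSecond_add_mul_modEq {k m p r : ℕ}
    (h : ∀ j ≤ k, j ^ (r + p) ≡ j ^ r [MOD k ! * m]) (i : ℕ) :
    Nat.stirlingSecond (r + p * i) k ≡ Nat.stirlingSecond r k [MOD m] :=
  stirlingSecond_modEq_of_pow_modEq fun j hj ↦ pow_add_mul_modEq (h j hj) i

/- `5 ! * 8 = 2 ^ 6 * 15` has Carmichael exponent `16`, and exponents at least `6` kill the even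
bases modulo `2 ^ 6`, where they are not units. -/
theorem pow_add_sixteen_modEq {j : ℕ} (hj : j ≤ 5) {r : ℕ} (hr : 6 ≤ r) :
    j ^ (r + 16) ≡ j ^ r [MOD 5 ! * 8] := by
  have base : j ^ (6 + 16) ≡ j ^ 6 [MOD 5 ! * 8] := by decide +revert
  obtain ⟨s, rfl⟩ := Nat.exists_eq_add_of_le hr
  simpa only [← pow_add, add_right_comm 6 16 s] using base.mul_right (j ^ s)

theorem stirlingSecond_five_modEq {r : ℕ} (hr : 6 ≤ r) (i : ℕ) :
    Nat.stirlingSecond (16 * i + r) 5 ≡ Nat.stirlingSecond r 5 [MOD 8] := by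
  rw [add_comm]
  exact stirlingSecond_add_mul_modEq (fun _ hj ↦ pow_add_sixteen_modEq hj hr) i

theorem padicValNat_eq_of_dvd_of_not_dvd {p e n : ℕ} (h : p ^ e ∣ n)
    (h' : ¬p ^ (e + 1) ∣ n) : padicValNat p n = e := by
  have hp : p ≠ 1 := by rintro rfl; simp at h'
  have hn : n ≠ 0 := by rintro rfl; simp at h'
  rw [padicValNat_def' hp hn, multiplicity_eq_of_dvd_of_not_dvd h h']

/-- For i ≥ 1, ν₂(S(16i+12,5)) ≥ 3, ν₂(S(16i+7,5)) = 2 and ν₂(S(16i+15,5)) ≥ 3. -/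
theorem nu2_stirling_five_16i (i : ℕ) (hi : 1 ≤ i) :
    3 ≤ padicValNat 2 (stirling2 (16 * i + 12) 5) ∧
    padicValNat 2 (stirling2 (16 * i + 7) 5) = 2 ∧
    3 ≤ padicValNat 2 (stirling2 (16 * i + 15) 5) := by
  have hS (r : ℕ) (hr : 6 ≤ r) := stirlingSecond_five_modEq hr i
  have ne_zero (r : ℕ) (hr : 5 ≤ r) : Nat.stirlingSecond (16 * i + r) 5 ≠ 0 :=
    (stirlingSecond_pos (by decide) (by lia)).ne'
  have S12 : Nat.stirlingSecond 12 5 = 1379400 := rfl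
  have S7 : Nat.stirlingSecond 7 5 = 140 := rfl
  have S15 : Nat.stirlingSecond 15 5 = 210766920 := rfl
  simp only [stirling2_eq_stirlingSecond]
  refine ⟨(padicValNat_dvd_iff_le (ne_zero 12 (by decide))).1 ?_,
    padicValNat_eq_of_dvd_of_not_dvd ?_ ?_,
    (padicValNat_dvd_iff_le (ne_zero 15 (by decide))).1 ?_⟩
  · rw [(hS 12 (by decide)).dvd_iff (by decide), S12]
    decide
  · rw [(hS 7 (by decide)).dvd_iff (by decide), S7]
    decide
  · rw [(hS 7 (by decide)).dvd_iff (by decide), S7]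
    decide
  · rw [(hS 15 (by decide)).dvd_iff (by decide), S15]
    decide
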